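/- Let κ, γ₁, γ₂, c ∈ ℝ and define the 7×7 real matrix A by A = [[2γ₁,0,0,0,0,0,0], [−(γ₁−2γ₂)c, 4κ, 0, 0, 0, (γ₁−2γ₂)/2, 0], [0,0,2κ+γ₁,0,0,0,0], [0,0,0,8κ,0,−γ₁c,0], [0,0,−γ₁c,0,6κ,0,0], [−2γ₂c,0,0,0,0,4κ+γ₂,0], [0,0,0,0,0,0,4κ]]. Then the characteristic polynomial of A is det(λ·Id − A) = (λ−2γ₁)(λ−4κ)²(λ−(2κ+γ₁))(λ−8κ)(λ−6κ)(λ−(4κ+γ₂)). In particular, if γ₁ ≥ 0, γ₂ ≥ 0 and κ > 0, all eigenvalues of A are real and nonnegative. -/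

import Mathlib

open Matrix

/-!
Reading the nonzero off-diagonal entries of `A` as arrows `i → j` gives only `1 → 5 → 0`, `1 → 0`,
`3 → 5` and `4 → 2` (rows and columns counted from `0`). There is no cycle, so ordering the basis
along these arrows makes `A` upper triangular, and its eigenvalues are its diagonal entries.
-/

section Triangular

variable {n α R : Type*} [Fintype n] [DecidableEq n] [LinearOrder α] [CommRing R]
  {M : Matrix n n R} {b : n → α}

theorem det_of_blockTriangular_of_injective (hM : M.BlockTriangular b)
    (hb : Function.Injective b) : M.det = ∏ i, M i i :=
  letI := LinearOrder.lift' b hb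
  det_of_isUpperTriangular hM

theorem det_smul_one_sub_of_blockTriangular_of_injective (hM : M.BlockTriangular b)
    (hb : Function.Injective b) (x : R) :
    (x • (1 : Matrix n n R) - M).det = ∏ i, (x - M i i) := by
  rw [smul_one_eq_diagonal,
    det_of_blockTriangular_of_injective ((blockTriangular_diagonal _).sub hM) hb]
  simp only [Matrix.sub_apply, diagonal_apply_eq]

theorem det_smul_one_sub_eq_zero_iff_of_blockTriangular_of_injective [IsDomain R]
    (hM : M.BlockTriangular b) (hb : Function.Injective b) (x : R) :
    (x • (1 : Matrix n n R) - M).det = 0 ↔ ∃ i, M i i = x := by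
  simp only [det_smul_one_sub_of_blockTriangular_of_injective hM hb, Finset.prod_eq_zero_iff,
    Finset.mem_univ, true_and, sub_eq_zero, eq_comm (a := x)]

end Triangular

section Radial

variable {K : Type*} [Field K]

/-- The matrix `A` of the zeroth-order part of the subprincipal operator at the radial set, with
entries in an arbitrary field. -/
def radialMatrix (κ γ₁ γ₂ c : K) : Matrix (Fin 7) (Fin 7) K :=
  !![2 * γ₁, 0, 0, 0, 0, 0, 0;
     -((γ₁ - 2 * γ₂) * c), 4 * κ, 0, 0, 0, (γ₁ - 2 * γ₂) / 2, 0;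
     0, 0, 2 * κ + γ₁, 0, 0, 0, 0;
     0, 0, 0, 8 * κ, 0, -(γ₁ * c), 0;
     0, 0, -(γ₁ * c), 0, 6 * κ, 0, 0;
     -(2 * γ₂ * c), 0, 0, 0, 0, 4 * κ + γ₂, 0;
     0, 0, 0, 0, 0, 0, 4 * κ]

/-- The position of each basis vector in the order `1, 3, 5, 0, 4, 2, 6`, in which `radialMatrix`
is upper triangular. -/
def radialRank : Fin 7 → ℕ := ![3, 0, 5, 1, 4, 2, 6]

theorem radialRank_injective : Function.Injective radialRank := by
  decide

theorem radialMatrix_blockTriangular (κ γ₁ γ₂ c : K) :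
    (radialMatrix κ γ₁ γ₂ c).BlockTriangular radialRank := by
  intro i j hij
  fin_cases i <;> fin_cases j <;> first | rfl | exact absurd hij (by decide)

theorem radialMatrix_diag (κ γ₁ γ₂ c : K) :
    (radialMatrix κ γ₁ γ₂ c).diag =
      ![2 * γ₁, 4 * κ, 2 * κ + γ₁, 8 * κ, 6 * κ, 4 * κ + γ₂, 4 * κ] := by
  ext i
  fin_cases i <;> rfl

theorem radialMatrix_diag_nonneg [LinearOrder K] [IsStrictOrderedRing K] {κ γ₁ γ₂ : K}
    (hκ : 0 ≤ κ) (hγ₁ : 0 ≤ γ₁) (hγ₂ : 0 ≤ γ₂) (c : K) :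
    0 ≤ (radialMatrix κ γ₁ γ₂ c).diag := by
  rw [radialMatrix_diag]
  intro i
  fin_cases i <;> dsimp <;> positivity

theorem det_smul_one_sub_radialMatrix (κ γ₁ γ₂ c lam : K) :
    (lam • (1 : Matrix (Fin 7) (Fin 7) K) - radialMatrix κ γ₁ γ₂ c).det =
      (lam - 2 * γ₁) * (lam - 4 * κ) ^ 2 * (lam - (2 * κ + γ₁)) * (lam - 8 * κ)
        * (lam - 6 * κ) * (lam - (4 * κ + γ₂)) := by
  rw [det_smul_one_sub_of_blockTriangular_of_injective
    (radialMatrix_blockTriangular κ γ₁ γ₂ c) radialRank_injective]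
  simp only [← diag_apply, radialMatrix_diag, Fin.prod_univ_seven]
  dsimp
  ring

end Radial

theorem stmt_19_general {K L : Type*} [Field K] [LinearOrder K] [IsStrictOrderedRing K]
    [CommRing L] [IsDomain L] (f : K →+* L) (κ γ₁ γ₂ c : K) :
    (∀ lam : K, (lam • (1 : Matrix (Fin 7) (Fin 7) K) - radialMatrix κ γ₁ γ₂ c).det =
      (lam - 2 * γ₁) * (lam - 4 * κ) ^ 2 * (lam - (2 * κ + γ₁)) * (lam - 8 * κ)
        * (lam - 6 * κ) * (lam - (4 * κ + γ₂))) ∧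
    (0 ≤ γ₁ → 0 ≤ γ₂ → 0 ≤ κ → ∀ z : L,
      (z • (1 : Matrix (Fin 7) (Fin 7) L) - (radialMatrix κ γ₁ γ₂ c).map f).det = 0 →
        ∃ x : K, 0 ≤ x ∧ f x = z) := by
  refine ⟨det_smul_one_sub_radialMatrix κ γ₁ γ₂ c, fun hγ₁ hγ₂ hκ z hz => ?_⟩
  obtain ⟨i, hi⟩ := (det_smul_one_sub_eq_zero_iff_of_blockTriangular_of_injective
    ((radialMatrix_blockTriangular κ γ₁ γ₂ c).map f) radialRank_injective z).mp hz
  exact ⟨_, radialMatrix_diag_nonneg hκ hγ₁ hγ₂ c i, hi⟩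

/-- The characteristic polynomial of the radial-point subprincipal matrix `A` of the
modified linearized gauged Einstein operator factors as
`(λ−2γ₁)(λ−4κ)²(λ−(2κ+γ₁))(λ−8κ)(λ−6κ)(λ−(4κ+γ₂))`; in particular, if `γ₁, γ₂ ≥ 0` and
`κ > 0`, all (complex) eigenvalues of `A` are real and nonnegative. -/
theorem stmt_19 (κ γ₁ γ₂ c : ℝ)
    (A : Matrix (Fin 7) (Fin 7) ℝ)
    (hA : A = !![2 * γ₁, 0, 0, 0, 0, 0, 0;
                 -((γ₁ - 2 * γ₂) * c), 4 * κ, 0, 0, 0, (γ₁ - 2 * γ₂) / 2, 0;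
                 0, 0, 2 * κ + γ₁, 0, 0, 0, 0;
                 0, 0, 0, 8 * κ, 0, -(γ₁ * c), 0;
                 0, 0, -(γ₁ * c), 0, 6 * κ, 0, 0;
                 -(2 * γ₂ * c), 0, 0, 0, 0, 4 * κ + γ₂, 0;
                 0, 0, 0, 0, 0, 0, 4 * κ]) :
    (∀ lam : ℝ, (lam • (1 : Matrix (Fin 7) (Fin 7) ℝ) - A).det =
      (lam - 2 * γ₁) * (lam - 4 * κ) ^ 2 * (lam - (2 * κ + γ₁)) * (lam - 8 * κ)
        * (lam - 6 * κ) * (lam - (4 * κ + γ₂))) ∧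
    (0 ≤ γ₁ → 0 ≤ γ₂ → 0 < κ →
      ∀ z : ℂ, (z • (1 : Matrix (Fin 7) (Fin 7) ℂ) - A.map (fun x => (x : ℂ))).det = 0 →
        z.im = 0 ∧ 0 ≤ z.re) := by
  subst hA
  refine (stmt_19_general Complex.ofRealHom κ γ₁ γ₂ c).imp_right fun hroots hγ₁ hγ₂ hκ z hz => ?_
  obtain ⟨x, hx, rfl⟩ := hroots hγ₁ hγ₂ hκ.le z hz
  exact ⟨Complex.ofReal_im x, hx⟩
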